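/- For every integer a: ψ(ω^a R_1) = 2^{2s} − 1 if a ≡ 0 (mod M), and ψ(ω^a R_1) = −1 otherwise; ψ(ω^a R_2) = −2^{s−1}(2^s + 1) if a ≡ 0 (mod M), ψ(ω^a R_2) = 2^{s−1}(2^s − 1) if −a mod M ∈ T_1, and ψ(ω^a R_2) = −2^{s−1} otherwise; ψ(ω^a R_3) = −2^{s−1}(2^s − 1) if a ≡ 0 (mod M), ψ(ω^a R_3) = −2^{s−1}(2^s − 1) if −a mod M ∈ T_1, and ψ(ω^a R_3) = 2^{s−1} otherwise. -/

import Mathlib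

noncomputable section

open scoped BigOperators

/-- `M = 2^{2s} + 2^s + 1`. -/
abbrev Mof (s : ℕ) : ℕ := 2 ^ (2 * s) + 2 ^ s + 1

/-- The relative trace from `F` (of order `2^{3s}`) to its subfield `E` of order `2^s`:
`Tr_{F/E}(x) = x + x^{2^s} + x^{2^{2s}}`, viewed as a map `F → F`. -/
def trFE {F : Type*} [Field F] (s : ℕ) (x : F) : F :=
  x + x ^ (2 ^ s) + x ^ (2 ^ (2 * s))

/-- `ψ(x) = 1` if the absolute trace `Tr_{F/𝔽₂}(x) = 0`, and `-1` otherwise. -/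
def psi (F : Type*) [Field F] [Algebra (ZMod 2) F] (x : F) : ℤ :=
  if Algebra.trace (ZMod 2) F x = 0 then 1 else -1

/-- `ψ(cS) = ∑_{x ∈ S} ψ(c·x)`. -/
def psiSum (F : Type*) [Field F] [Algebra (ZMod 2) F] (c : F) (S : Set F) : ℤ :=
  ∑ᶠ x ∈ S, psi F (c * x)

/-- `D = {u ∈ F^× : Tr_{F/E}(u⁻¹) = 0}`. -/
def Dset (F : Type*) [Field F] (s : ℕ) : Set F :=
  {u | u ≠ 0 ∧ trFE s u⁻¹ = 0}

/-- `S_a = {u ∈ F^× : Tr_{F/E}(u^{2^s+1}) = 0 ∧ Tr_{F/E}(ω^a u) = 0}`. -/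
def Sa {F : Type*} [Field F] (s : ℕ) (ω : F) (a : ℤ) : Set F :=
  {u | u ≠ 0 ∧ trFE s (u ^ (2 ^ s + 1)) = 0 ∧ trFE s (ω ^ a * u) = 0}

/-- `T₁ ⊆ ℤ/Mℤ`: classes `a` with `|S_a| = 2^s - 1`. -/
def T1 {F : Type*} [Field F] (s : ℕ) (ω : F) : Set (ZMod (Mof s)) :=
  {x | (Sa s ω (x.val : ℤ)).ncard = 2 ^ s - 1}

/-- `T₂ ⊆ ℤ/Mℤ`: classes `a` with `|S_a| = 2(2^s - 1)`. -/
def T2 {F : Type*} [Field F] (s : ℕ) (ω : F) : Set (ZMod (Mof s)) :=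
  {x | (Sa s ω (x.val : ℤ)).ncard = 2 * (2 ^ s - 1)}

/-- `T₃ ⊆ ℤ/Mℤ`: classes `a` with `|S_a| = 0`. -/
def T3 {F : Type*} [Field F] (s : ℕ) (ω : F) : Set (ZMod (Mof s)) :=
  {x | (Sa s ω (x.val : ℤ)).ncard = 0}

/-- The cyclotomic class `C_i^{(M,K)} = {g^{i+Mt} : t ∈ ℤ}`. -/
def cyc {K : Type*} [Field K] (M : ℕ) (g : K) (i : ℤ) : Set K :=
  {x | ∃ t : ℤ, x = g ^ (i + (M : ℤ) * t)}

/-- `⋃_{i ∈ T} C_i^{(M,K)}` for a set `T ⊆ ℤ/Mℤ` of indices. -/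
def Rclass {K : Type*} [Field K] (s : ℕ) (g : K) (T : Set (ZMod (Mof s))) : Set K :=
  ⋃ i ∈ T, cyc (Mof s) g ((i.val : ℤ))

/-- The family `R_0 = {0}`, `R_k = ⋃_{i ∈ T_k} C_i^{(M,K)}`, `k = 1, 2, 3`. -/
def Rfam {F K : Type*} [Field F] [Field K] (s : ℕ) (ω : F) (g : K) : Fin 4 → Set K :=
  ![{0}, Rclass s g (T1 s ω), Rclass s g (T2 s ω), Rclass s g (T3 s ω)]

/-- Indicator `[P] = 1` if `P` holds, `0` otherwise. -/
def Ind (P : Prop) : ℤ := @ite ℤ P (Classical.propDecidable P) 1 0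

/-!
Regard `F` as a three-dimensional space over `E = 𝔽_q`, `q = 2 ^ s`. The quadratic form
`u ↦ Tr (u ^ (q + 1))` defines a conic in the projective plane of `F`, and `ω ^ a` is the dual
coordinate of the line `Tr (ω ^ a * u) = 0`, which depends only on `a` modulo `M = q² + q + 1`.
Hence `R₁`, `R₂`, `R₃` are the tangents, the secants and the passants of the conic. Since `q` is
even, all tangents pass through a common point, the nucleus, which here is spanned by `1`; this
gives the character sum over `R₁` by orthogonality. Summing the character over all lines, each
weighted by its number of points on the conic, and exchanging the summation over the incident
pairs gives a second linear relation, and the vanishing of the sum over `F` a third. They determine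
the sums over `R₂` and `R₃`. Finally `Tr (x ^ (q + 1)) = N x * Tr x⁻¹`, with `N` the norm to `E`,
identifies the points `ω ^ a` of the conic with the tangents of index `-a`.
-/

section CharacterSums

variable {E V R : Type*} [Field E] [AddCommGroup V] [Module E V]

theorem dual_mem_span_singleton_iff {f g : Module.Dual E V} :
    f ∈ Submodule.span E {g} ↔ LinearMap.ker g ≤ LinearMap.ker f := by
  constructor
  · rw [Submodule.mem_span_singleton]
    rintro ⟨e, rfl⟩
    exact LinearMap.ker_le_ker_smul g e
  · intro h
    simpa using mem_span_of_iInf_ker_le_ker (L := fun _ : Unit ↦ g) (K := f) (by simpa using h)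

theorem natCard_ker_dual [FiniteDimensional E V] {f : Module.Dual E V} (hf : f ≠ 0) :
    Nat.card (LinearMap.ker f) = Nat.card E ^ (Module.finrank E V - 1) := by
  rw [Module.natCard_eq_pow_finrank (K := E), ← Module.Dual.finrank_ker_add_one_of_ne_zero hf,
    Nat.add_sub_cancel]

theorem ncard_span_singleton_diff_zero {v : V} (hv : v ≠ 0) :
    ((Submodule.span E {v} : Set V) \ {0}).ncard = Nat.card E - 1 := by
  rw [Set.ncard_sdiff_singleton_of_mem (Submodule.zero_mem _)]
  exact congrArg (· - 1) (Nat.card_congr (LinearEquiv.toSpanNonzeroSingleton E V v hv).toEquiv).symm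

theorem mem_span_singleton_comm {u v : V} (hu : u ≠ 0) (hv : v ≠ 0) :
    v ∈ Submodule.span E {u} ↔ u ∈ Submodule.span E {v} := by
  have swap {x y : V} (hy : y ≠ 0) (hxy : y ∈ Submodule.span E {x}) :
      x ∈ Submodule.span E {y} := by
    obtain ⟨e, rfl⟩ := Submodule.mem_span_singleton.mp hxy
    have he : e ≠ 0 := fun he ↦ hy (by rw [he, zero_smul])
    exact Submodule.mem_span_singleton.mpr ⟨e⁻¹, inv_smul_smul₀ he x⟩
  exact ⟨swap hv, swap hu⟩

theorem addChar_comp_dual_eq_zero_iff [CommMonoid R] {η : AddChar E R} (hη : η ≠ 0)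
    {f : Module.Dual E V} : η.compAddMonoidHom f.toAddMonoidHom = 0 ↔ f = 0 := by
  refine ⟨fun h ↦ ?_, fun h ↦ by ext; simp [h]⟩
  contrapose! hη
  ext e
  obtain ⟨v, rfl⟩ := LinearMap.surjective hη e
  exact DFunLike.congr_fun h v

variable [CommRing R] [IsDomain R] {η : AddChar E R} [Fintype V]

open Classical in
theorem sum_addChar_ker (hη : η ≠ 0) (f g : Module.Dual E V) :
    ∑ x with g x = 0, η (f x) =
      if f ∈ Submodule.span E {g} then (Nat.card (LinearMap.ker g) : R) else 0 := by
  have htriv : η.compAddMonoidHom (f.domRestrict (LinearMap.ker g)).toAddMonoidHom = 0 ↔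
      f ∈ Submodule.span E {g} := by
    rw [addChar_comp_dual_eq_zero_iff hη, dual_mem_span_singleton_iff, LinearMap.ext_iff]
    exact Subtype.forall
  calc ∑ x with g x = 0, η (f x)
      = ∑ x : LinearMap.ker g,
          η.compAddMonoidHom (f.domRestrict (LinearMap.ker g)).toAddMonoidHom x :=
        Finset.sum_subtype _ (by simp) _
    _ = _ := by rw [AddChar.sum_eq_ite, Nat.card_eq_fintype_card]; simp only [htriv]

open Classical in
theorem sum_addChar_orthogonal {b : LinearMap.BilinForm E V} (hb : b.Nondegenerate)
    (hη : η ≠ 0) {u : V} (hu : u ≠ 0) (v : V) :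
    ∑ x with b x u = 0, η (b x v) =
      if v ∈ Submodule.span E {u} then (Nat.card E : R) ^ (Module.finrank E V - 1) else 0 := by
  have hinj : Function.Injective b.flip := LinearMap.ker_eq_bot.mp hb.flip.ker_eq_bot
  have hspan : b.flip v ∈ Submodule.span E {b.flip u} ↔ v ∈ Submodule.span E {u} := by
    rw [← Set.image_singleton, ← Submodule.map_span]
    exact hinj.mem_set_image
  rw [← if_congr hspan rfl rfl, ← Nat.cast_pow,
    ← natCard_ker_dual ((map_ne_zero_iff b.flip hinj).mpr hu)]
  exact sum_addChar_ker hη (b.flip v) (b.flip u)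

end CharacterSums

section QuadraticForms

variable {E V : Type*} [Field E] [AddCommGroup V] [Module E V] {Q : QuadraticForm E V}

open Classical in
theorem ncard_isotropic_span_singleton {v : V} (hv : v ≠ 0) :
    ({u | u ∈ Submodule.span E {v} ∧ Q u = 0} \ {0}).ncard =
      if Q v = 0 then Nat.card E - 1 else 0 := by
  split_ifs with hQv
  · rw [← ncard_span_singleton_diff_zero (E := E) hv]
    congr 2 with u
    refine and_iff_left_of_imp fun hu ↦ ?_
    obtain ⟨e, rfl⟩ := Submodule.mem_span_singleton.mp hu
    rw [QuadraticMap.map_smul, hQv, smul_zero]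
  · rw [Set.sdiff_eq_empty.mpr, Set.ncard_empty]
    rintro u ⟨hu, hQu⟩
    by_contra hu0
    obtain ⟨e, rfl⟩ := Submodule.mem_span_singleton.mp ((mem_span_singleton_comm hv hu0).mp hu)
    exact hQv (by rw [QuadraticMap.map_smul, hQu, smul_zero])

theorem map_add_smul_of_polar_eq_zero {n : V} (hn : ∀ v, QuadraticMap.polar Q n v = 0)
    (v : V) (e : E) : Q (v + e • n) = Q v + e ^ 2 * Q n := by
  rw [QuadraticMap.map_add Q, QuadraticMap.polar_comm, QuadraticMap.polar_smul_left, hn,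
    QuadraticMap.map_smul]
  simp only [smul_eq_mul]
  ring

theorem ncard_isotropic_of_nucleus_mem [Finite E] [CharP E 2] {n : V}
    (hQn : Q n ≠ 0) (hn : ∀ v, QuadraticMap.polar Q n v = 0) {W : Submodule E V} (hW : n ∈ W) :
    {v | v ∈ W ∧ Q v = 0}.ncard * Nat.card E = Nat.card W := by
  let translate : {v | v ∈ W ∧ Q v = 0} × E → W :=
    fun p ↦ ⟨p.1 + p.2 • n, W.add_mem p.1.2.1 (W.smul_mem _ hW)⟩
  have map_translate (p) : Q (translate p) = p.2 ^ 2 * Q n := by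
    rw [map_add_smul_of_polar_eq_zero hn, p.1.2.2, zero_add]
  have hbij : Function.Bijective translate := by
    constructor
    · rintro ⟨u, e⟩ ⟨u', e'⟩ h
      have he : e = e' := by
        have := congrArg (fun w : W ↦ Q w) h
        simp only [map_translate, mul_left_inj' hQn] at this
        exact CharTwo.sq_injective this
      subst he
      simpa [translate, Subtype.ext_iff] using h
    · rintro ⟨w, hw⟩
      obtain ⟨e, he⟩ := FiniteField.isSquare_of_char_two (CharP.ringChar_of_prime_eq_zero
        Nat.prime_two (CharTwo.two_eq_zero (R := E))) (Q w / Q n)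
      refine ⟨(⟨w + e • n, W.add_mem hw (W.smul_mem _ hW), ?_⟩, e), ?_⟩
      · rw [map_add_smul_of_polar_eq_zero hn, sq, ← he, div_mul_cancel₀ _ hQn,
          CharTwo.add_self_eq_zero]
      · ext
        simp [translate, add_assoc, ← add_smul, CharTwo.add_self_eq_zero]
  rw [← Nat.card_congr (Equiv.ofBijective _ hbij), Nat.card_prod]
  rfl

theorem exists_isotropic_of_polar_ne_zero {u w : V} (hu : Q u = 0)
    (huw : QuadraticMap.polar Q u w ≠ 0) :
    ∃ v ∈ Submodule.span E {u, w}, Q v = 0 ∧ QuadraticMap.polar Q u v ≠ 0 := by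
  refine ⟨w - (Q w / QuadraticMap.polar Q u w) • u, ?_, ?_, ?_⟩
  · exact Submodule.sub_mem _ (Submodule.subset_span (by simp))
      (Submodule.smul_mem _ _ (Submodule.subset_span (by simp)))
  · rw [sub_eq_add_neg, ← neg_smul, QuadraticMap.map_add Q, QuadraticMap.polar_smul_right,
      QuadraticMap.map_smul, hu, QuadraticMap.polar_comm Q w]
    simp [huw]
  · simpa [sub_eq_add_neg, QuadraticMap.polar_add_right, QuadraticMap.polar_neg_right,
      QuadraticMap.polar_self, hu] using huw

theorem linearIndependent_pair_of_isotropic {u v : V} (hu : Q u = 0) (hv : Q v = 0)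
    (huv : QuadraticMap.polar Q u v ≠ 0) : LinearIndependent E ![u, v] := by
  rw [LinearIndependent.pair_iff]
  intro s t h
  have ht : t = 0 := by
    simpa [QuadraticMap.polar_add_right, QuadraticMap.polar_self, hu, huv]
      using congrArg (QuadraticMap.polar Q u) h
  have hs : s = 0 := by
    simpa [QuadraticMap.polar_add_right, QuadraticMap.polar_self, hv, huv,
      QuadraticMap.polar_comm Q v u] using congrArg (QuadraticMap.polar Q v) h
  exact ⟨hs, ht⟩

theorem isotropic_eq_union_span {u v : V} (hu : Q u = 0) (hv : Q v = 0)
    (huv : QuadraticMap.polar Q u v ≠ 0) :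
    {w | w ∈ Submodule.span E {u, v} ∧ Q w = 0} =
      (Submodule.span E {u} : Set V) ∪ (Submodule.span E {v} : Set V) := by
  ext w
  simp only [Set.mem_ofPred_eq, Set.mem_union, SetLike.mem_coe, Submodule.mem_span_pair,
    Submodule.mem_span_singleton]
  constructor
  · rintro ⟨⟨s, t, rfl⟩, h⟩
    have hst : t = 0 ∨ s = 0 := by
      simpa [QuadraticMap.map_add Q, QuadraticMap.map_smul, hu, hv, huv] using h
    rcases hst with rfl | rfl
    · exact .inl ⟨s, by simp⟩
    · exact .inr ⟨t, by simp⟩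
  · rintro (⟨s, rfl⟩ | ⟨t, rfl⟩)
    · exact ⟨⟨s, 0, by simp⟩, by simp [QuadraticMap.map_smul, hu]⟩
    · exact ⟨⟨0, t, by simp⟩, by simp [QuadraticMap.map_smul, hv]⟩

theorem ncard_isotropic_of_hyperbolic [Finite V] {W : Submodule E V}
    (hW : Module.finrank E W = 2) {u w : V} (huW : u ∈ W) (hwW : w ∈ W) (hu : Q u = 0)
    (huw : QuadraticMap.polar Q u w ≠ 0) :
    ({v | v ∈ W ∧ Q v = 0} \ {0}).ncard = 2 * (Nat.card E - 1) := by
  have : FiniteDimensional E W := Module.finite_of_finrank_pos (by omega)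
  obtain ⟨v, hvuw, hv, huv⟩ := exists_isotropic_of_polar_ne_zero hu huw
  have hvW : v ∈ W := Submodule.span_le.mpr (by simp [Set.insert_subset_iff, huW, hwW]) hvuw
  have hli := linearIndependent_pair_of_isotropic hu hv huv
  have hspan : Submodule.span E {u, v} = W := by
    refine Submodule.eq_of_le_of_finrank_eq
      (Submodule.span_le.mpr (by simp [Set.insert_subset_iff, huW, hvW])) ?_
    rw [hW, ← Matrix.range_cons_cons_empty, finrank_span_eq_card hli, Fintype.card_fin]
  have hu0 : u ≠ 0 := hli.ne_zero 0
  have hv0 : v ≠ 0 := hli.ne_zero 1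
  have hdisj : Disjoint ((Submodule.span E {u} : Set V) \ {0})
      ((Submodule.span E {v} : Set V) \ {0}) := by
    rw [Set.disjoint_left]
    rintro _ ⟨hxu, hx0⟩ ⟨hxv, -⟩
    obtain ⟨s, rfl⟩ := Submodule.mem_span_singleton.mp hxu
    obtain ⟨t, ht⟩ := Submodule.mem_span_singleton.mp hxv
    obtain ⟨rfl, -⟩ := LinearIndependent.pair_iff.mp hli s (-t) (by simp [ht])
    exact hx0 (zero_smul E u)
  rw [← hspan, isotropic_eq_union_span hu hv huv, Set.union_sdiff_distrib,
    Set.ncard_union_eq hdisj, ncard_span_singleton_diff_zero hu0,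
    ncard_span_singleton_diff_zero hv0, two_mul]

end QuadraticForms

section Conics

variable {E V : Type*} [Field E] [AddCommGroup V] [Module E V]

/-- The vector `n` spans the nucleus of the conic `Q = 0`, the point lying on all the tangents of
the conic. In characteristic two it is the radical of the polar form. -/
structure HasNucleus (Q : QuadraticForm E V) (n : V) : Prop where
  map_ne_zero : Q n ≠ 0
  ker_polarBilin : LinearMap.ker Q.polarBilin = Submodule.span E {n}

/-- The nonzero isotropic vectors of the line `b x u = 0` with dual coordinate `x`; each point of
the conic on that line contributes `|E| - 1` of them. -/
def isotropicOnLine (Q : QuadraticForm E V) (b : LinearMap.BilinForm E V) (x : V) : Set V :=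
  {u | u ≠ 0 ∧ Q u = 0 ∧ b x u = 0}

/-- The dual coordinates of the lines that meet the conic `Q = 0` in `k` points. -/
def linesMeeting [Finite V] (Q : QuadraticForm E V) (b : LinearMap.BilinForm E V) (k : ℕ) :
    Finset V :=
  (Set.toFinite {x | x ≠ 0 ∧ (isotropicOnLine Q b x).ncard = k * (Nat.card E - 1)}).toFinset

variable {Q : QuadraticForm E V} {b : LinearMap.BilinForm E V} {n : V}

theorem isotropicOnLine_eq_diff (Q : QuadraticForm E V) (b : LinearMap.BilinForm E V) (x : V) :
    isotropicOnLine Q b x = {u | u ∈ LinearMap.ker (b x) ∧ Q u = 0} \ {0} := by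
  ext u
  simp only [isotropicOnLine, Set.mem_ofPred_eq, Set.mem_sdiff, LinearMap.mem_ker,
    Set.mem_singleton_iff]
  tauto

theorem isotropicOnLine_smul (Q : QuadraticForm E V) (b : LinearMap.BilinForm E V) {e : E}
    (he : e ≠ 0) (x : V) : isotropicOnLine Q b (e • x) = isotropicOnLine Q b x := by
  simp only [isotropicOnLine, map_smul, LinearMap.smul_apply, smul_eq_zero, he, false_or]

theorem mem_linesMeeting [Finite V] {k : ℕ} {x : V} : x ∈ linesMeeting Q b k ↔
    x ≠ 0 ∧ (isotropicOnLine Q b x).ncard = k * (Nat.card E - 1) := by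
  simp only [linesMeeting, Set.Finite.mem_toFinset, Set.mem_ofPred_eq]

open Classical in
theorem sum_ncard_isotropicOnLine_mul_addChar [Finite E] [Fintype V]
    (hV : Module.finrank E V = 3) {R : Type*} [CommRing R] [IsDomain R] {η : AddChar E R}
    (hb : b.Nondegenerate) (hη : η ≠ 0) {v : V} (hv : v ≠ 0) :
    ∑ x, ((isotropicOnLine Q b x).ncard : R) * η (b x v) =
      if Q v = 0 then (Nat.card E : R) ^ 2 * (Nat.card E - 1) else 0 := by
  calc ∑ x, ((isotropicOnLine Q b x).ncard : R) * η (b x v)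
      = ∑ x, ∑ u with u ≠ 0 ∧ Q u = 0 ∧ b x u = 0, η (b x v) := by
        refine Finset.sum_congr rfl fun x _ ↦ ?_
        rw [Finset.sum_const, nsmul_eq_mul, ← Set.ncard_coe_finset, Finset.coe_filter_univ]
        rfl
    _ = ∑ u with u ≠ 0 ∧ Q u = 0, ∑ x with b x u = 0, η (b x v) :=
        Finset.sum_comm' fun x u ↦ by
          simp only [Finset.mem_filter, Finset.mem_univ, true_and]
          tauto
    _ = ∑ u with u ≠ 0 ∧ Q u = 0,
          if u ∈ Submodule.span E {v} then (Nat.card E : R) ^ 2 else 0 := by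
        refine Finset.sum_congr rfl fun u hu ↦ ?_
        have hu0 : u ≠ 0 := (Finset.mem_filter.mp hu).2.1
        rw [sum_addChar_orthogonal hb hη hu0, hV]
        exact if_congr (mem_span_singleton_comm hu0 hv) rfl rfl
    _ = if Q v = 0 then (Nat.card E : R) ^ 2 * (Nat.card E - 1) else 0 := by
        have hset : {u | (u ≠ 0 ∧ Q u = 0) ∧ u ∈ Submodule.span E {v}} =
            {u | u ∈ Submodule.span E {v} ∧ Q u = 0} \ {0} := by
          ext u
          simp only [Set.mem_ofPred_eq, Set.mem_sdiff, Set.mem_singleton_iff]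
          tauto
        rw [← Finset.sum_filter, Finset.filter_filter, Finset.sum_const, nsmul_eq_mul,
          ← Set.ncard_coe_finset, Finset.coe_filter_univ, hset, ncard_isotropic_span_singleton hv,
          Nat.cast_ite, Nat.cast_pred Nat.card_pos, Nat.cast_zero, ite_mul, zero_mul, mul_comm]

namespace HasNucleus

theorem polar_eq_zero (h : HasNucleus Q n) (v : V) : QuadraticMap.polar Q n v = 0 :=
  LinearMap.congr_fun (LinearMap.mem_ker.mp
    (h.ker_polarBilin ▸ Submodule.mem_span_singleton_self n)) v

theorem ne_zero (h : HasNucleus Q n) : n ≠ 0 := by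
  rintro rfl
  exact h.map_ne_zero (QuadraticMap.map_zero Q)

theorem eq_zero_of_mem_span (h : HasNucleus Q n) {u : V} (hu : Q u = 0)
    (hun : u ∈ Submodule.span E {n}) : u = 0 := by
  obtain ⟨e, rfl⟩ := Submodule.mem_span_singleton.mp hun
  have he : e = 0 := by simpa [QuadraticMap.map_smul, h.map_ne_zero] using hu
  rw [he, zero_smul]

theorem ncard_isotropicOnLine_add_one_mul [Finite E] [CharP E 2] [Finite V]
    (h : HasNucleus Q n) {x : V} (hx : b x n = 0) :
    ((isotropicOnLine Q b x).ncard + 1) * Nat.card E = Nat.card (LinearMap.ker (b x)) := by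
  rw [isotropicOnLine_eq_diff, Set.ncard_sdiff_singleton_add_one
    (by simp) (Set.toFinite _)]
  exact ncard_isotropic_of_nucleus_mem h.map_ne_zero h.polar_eq_zero hx

theorem exists_polar_ne_zero (h : HasNucleus Q n) {x u : V} (hx : b x n ≠ 0)
    (hu0 : u ≠ 0) (hu : Q u = 0) :
    ∃ w ∈ LinearMap.ker (b x), QuadraticMap.polar Q u w ≠ 0 := by
  by_contra! hpolar
  obtain ⟨e, he⟩ := Submodule.mem_span_singleton.mp
    (dual_mem_span_singleton_iff (f := Q.polarBilin u).mpr hpolar)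
  have he0 : e = 0 := by
    simpa [QuadraticMap.polar_comm, h.polar_eq_zero, hx] using LinearMap.congr_fun he n
  have hker : u ∈ LinearMap.ker Q.polarBilin := by
    rw [LinearMap.mem_ker, ← he, he0, zero_smul]
  exact hu0 (h.eq_zero_of_mem_span hu (h.ker_polarBilin ▸ hker))

section Plane

variable [Finite V] (hV : Module.finrank E V = 3)
include hV

theorem ncard_isotropicOnLine_zero [Finite E] [CharP E 2] (h : HasNucleus Q n) :
    (isotropicOnLine Q b 0).ncard = (Nat.card E + 1) * (Nat.card E - 1) := by
  have hcount := h.ncard_isotropicOnLine_add_one_mul (b := b) (x := 0) (by simp)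
  rw [map_zero, LinearMap.ker_zero, Nat.card_congr Submodule.topEquiv.toEquiv,
    Module.natCard_eq_pow_finrank (K := E) (V := V), hV, pow_succ,
    Nat.mul_left_inj Nat.card_pos.ne'] at hcount
  rw [← Nat.sq_sub_sq, one_pow, ← hcount, Nat.add_sub_cancel]

theorem ncard_isotropicOnLine_of_tangent [Finite E] [CharP E 2] (h : HasNucleus Q n)
    (hb : b.Nondegenerate) {x : V} (hx0 : x ≠ 0) (hx : b x n = 0) :
    (isotropicOnLine Q b x).ncard = Nat.card E - 1 := by
  have hcount := h.ncard_isotropicOnLine_add_one_mul hx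
  have hbx : b x ≠ 0 := (map_ne_zero_iff b (LinearMap.ker_eq_bot.mp hb.ker_eq_bot)).mpr hx0
  rw [natCard_ker_dual hbx, hV, sq, Nat.mul_left_inj Nat.card_pos.ne'] at hcount
  omega

theorem ncard_isotropicOnLine_of_not_tangent (h : HasNucleus Q n) {x : V} (hx : b x n ≠ 0) :
    (isotropicOnLine Q b x).ncard = 2 * (Nat.card E - 1) ∨
      (isotropicOnLine Q b x).ncard = 0 := by
  rcases (isotropicOnLine Q b x).eq_empty_or_nonempty with hempty | ⟨u, hu0, hu, hxu⟩
  · exact .inr (by rw [hempty, Set.ncard_empty])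
  obtain ⟨w, hxw, huw⟩ := h.exists_polar_ne_zero hx hu0 hu
  have hbx : b x ≠ 0 := fun h0 ↦ hx (by rw [h0, LinearMap.zero_apply])
  have hker : Module.finrank E (LinearMap.ker (b x)) = 2 := by
    have := Module.Dual.finrank_ker_add_one_of_ne_zero hbx
    omega
  rw [isotropicOnLine_eq_diff]
  exact .inl (ncard_isotropic_of_hyperbolic hker hxu hxw hu huw)

end Plane

section CharacterSums

variable {R : Type*} [CommRing R] [Finite E] [CharP E 2]
variable (hV : Module.finrank E V = 3)
include hV

theorem mem_linesMeeting_one_iff [Finite V] (h : HasNucleus Q n) (hb : b.Nondegenerate) {x : V} :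
    x ∈ linesMeeting Q b 1 ↔ x ≠ 0 ∧ b x n = 0 := by
  rw [mem_linesMeeting, one_mul]
  refine and_congr_right fun hx0 ↦
    ⟨fun hcard ↦ ?_, h.ncard_isotropicOnLine_of_tangent hV hb hx0⟩
  by_contra hx
  have hE := Finite.one_lt_card (α := E)
  rcases h.ncard_isotropicOnLine_of_not_tangent hV hx with h' | h' <;> omega

theorem sum_eq_add_sum_linesMeeting [Fintype V] (h : HasNucleus Q n) (hb : b.Nondegenerate)
    (f : V → R) :
    ∑ x, f x = f 0 + ∑ x ∈ linesMeeting Q b 1, f x + ∑ x ∈ linesMeeting Q b 2, f x +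
      ∑ x ∈ linesMeeting Q b 0, f x := by
  classical
  have hE := Finite.one_lt_card (α := E)
  have hdisj {j k : ℕ} (hjk : j ≠ k) : Disjoint (linesMeeting Q b j) (linesMeeting Q b k) := by
    refine Finset.disjoint_left.mpr fun x hj hk ↦ hjk ?_
    rw [mem_linesMeeting] at hj hk
    exact Nat.eq_of_mul_eq_mul_right (by omega) (hj.2.symm.trans hk.2)
  have hcover : insert 0 (linesMeeting Q b 1 ∪ linesMeeting Q b 2 ∪ linesMeeting Q b 0) =
      Finset.univ := by
    refine Finset.eq_univ_of_forall fun x ↦ ?_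
    simp only [Finset.mem_insert, Finset.mem_union, mem_linesMeeting]
    by_cases hx0 : x = 0
    · exact .inl hx0
    by_cases hx : b x n = 0
    · have := h.ncard_isotropicOnLine_of_tangent hV hb hx0 hx
      grind
    · have := h.ncard_isotropicOnLine_of_not_tangent hV hx
      grind
  rw [← hcover, Finset.sum_insert (by simp [mem_linesMeeting]), Finset.sum_union,
    Finset.sum_union (hdisj (by decide)), add_assoc, add_assoc, add_assoc]
  exact Finset.disjoint_union_left.mpr ⟨hdisj (by decide), hdisj (by decide)⟩

theorem sum_ncard_isotropicOnLine_mul [Fintype V] (h : HasNucleus Q n) (hb : b.Nondegenerate)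
    (f : V → R) :
    ∑ x, ((isotropicOnLine Q b x).ncard : R) * f x =
      (Nat.card E - 1) * ((Nat.card E + 1) * f 0 + ∑ x ∈ linesMeeting Q b 1, f x +
        2 * ∑ x ∈ linesMeeting Q b 2, f x) := by
  have hweight (k : ℕ) :
      ∑ x ∈ linesMeeting Q b k, ((isotropicOnLine Q b x).ncard : R) * f x =
        k * (Nat.card E - 1) * ∑ x ∈ linesMeeting Q b k, f x := by
    rw [Finset.mul_sum]
    refine Finset.sum_congr rfl fun x hx ↦ ?_
    rw [(mem_linesMeeting.mp hx).2, Nat.cast_mul, Nat.cast_pred Nat.card_pos]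
  rw [h.sum_eq_add_sum_linesMeeting hV hb, hweight, hweight, hweight,
    h.ncard_isotropicOnLine_zero hV, Nat.cast_mul, Nat.cast_pred Nat.card_pos]
  push_cast
  ring

variable [IsDomain R] {η : AddChar E R}

open Classical in
theorem sum_addChar_linesMeeting_one [Finite V] (h : HasNucleus Q n) (hb : b.Nondegenerate)
    (hη : η ≠ 0) (v : V) : ∑ x ∈ linesMeeting Q b 1, η (b x v) =
      (if v ∈ Submodule.span E {n} then (Nat.card E : R) ^ 2 else 0) - 1 := by
  let := Fintype.ofFinite V
  have htangent : Finset.univ.filter (fun x ↦ b x n = 0) = insert 0 (linesMeeting Q b 1) := by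
    ext x
    rw [Finset.mem_filter, Finset.mem_insert, h.mem_linesMeeting_one_iff hV hb]
    by_cases hx0 : x = 0 <;> simp [hx0]
  have hsum := sum_addChar_orthogonal hb hη h.ne_zero v
  rw [htangent, Finset.sum_insert (by simp [mem_linesMeeting]), hV, map_zero,
    LinearMap.zero_apply, AddChar.map_zero_eq_one] at hsum
  exact eq_sub_of_add_eq' hsum

variable [CharZero R]

open Classical in
theorem two_mul_sum_addChar_linesMeeting_two [Finite V] (h : HasNucleus Q n) (hb : b.Nondegenerate)
    (hη : η ≠ 0) {v : V} (hv : v ≠ 0) : 2 * ∑ x ∈ linesMeeting Q b 2, η (b x v) =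
      (if Q v = 0 then (Nat.card E : R) ^ 2 else 0) -
        (if v ∈ Submodule.span E {n} then (Nat.card E : R) ^ 2 else 0) - Nat.card E := by
  let := Fintype.ofFinite V
  have hE : (Nat.card E : R) - 1 ≠ 0 := by
    rw [sub_ne_zero, Nat.cast_ne_one]
    exact Finite.one_lt_card.ne'
  have hcount := (h.sum_ncard_isotropicOnLine_mul hV hb fun x ↦ η (b x v)).symm.trans
    (sum_ncard_isotropicOnLine_mul_addChar hV hb hη hv)
  rw [h.sum_addChar_linesMeeting_one hV hb hη, map_zero, LinearMap.zero_apply,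
    AddChar.map_zero_eq_one] at hcount
  refine mul_left_cancel₀ hE ?_
  split_ifs at hcount ⊢ <;> linear_combination hcount

open Classical in
theorem two_mul_sum_addChar_linesMeeting_zero [Finite V] (h : HasNucleus Q n) (hb : b.Nondegenerate)
    (hη : η ≠ 0) {v : V} (hv : v ≠ 0) : 2 * ∑ x ∈ linesMeeting Q b 0, η (b x v) =
      Nat.card E - (if v ∈ Submodule.span E {n} then (Nat.card E : R) ^ 2 else 0) -
        (if Q v = 0 then (Nat.card E : R) ^ 2 else 0) := by
  let := Fintype.ofFinite V
  have hbv : b.flip v ≠ 0 :=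
    (map_ne_zero_iff b.flip (LinearMap.ker_eq_bot.mp hb.flip.ker_eq_bot)).mpr hv
  have htotal : ∑ x, η (b x v) = 0 :=
    AddChar.sum_eq_zero_of_ne_one ((addChar_comp_dual_eq_zero_iff hη).not.mpr hbv)
  rw [h.sum_eq_add_sum_linesMeeting hV hb, h.sum_addChar_linesMeeting_one hV hb hη, map_zero,
    LinearMap.zero_apply, AddChar.map_zero_eq_one] at htotal
  linear_combination 2 * htotal - h.two_mul_sum_addChar_linesMeeting_two hV hb hη hv

end CharacterSums

end HasNucleus

end Conics

section CubicExtension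

variable (E F : Type*) [Field E] [Field F] [Algebra E F] [Finite E] [Finite F]

/-- The quadratic form `u ↦ Tr (u * u ^ q)` over `E = 𝔽_q` on a finite extension `F` of `E`. -/
def frobeniusTraceForm : QuadraticForm E F :=
  letI := Fintype.ofFinite E
  LinearMap.BilinMap.toQuadraticMap ((Algebra.traceForm E F).compl₂
    (FiniteField.frobeniusAlgEquivOfAlgebraic E F).toLinearMap)

variable {E F}

theorem frobeniusTraceForm_apply (u : F) :
    frobeniusTraceForm E F u = Algebra.trace E F (u ^ (Nat.card E + 1)) := by
  let := Fintype.ofFinite E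
  rw [pow_succ', Nat.card_eq_fintype_card]
  rfl

theorem trace_pow_card (x : F) :
    Algebra.trace E F (x ^ Nat.card E) = Algebra.trace E F x := by
  let := Fintype.ofFinite E
  rw [Nat.card_eq_fintype_card]
  exact Algebra.trace_eq_of_algEquiv (FiniteField.frobeniusAlgEquivOfAlgebraic E F) x

section FinrankThree

variable (hEF : Module.finrank E F = 3)
include hEF

omit [Finite E] in
theorem algebraMap_trace_eq_of_finrank_eq_three (x : F) :
    algebraMap E F (Algebra.trace E F x) = x + x ^ Nat.card E + x ^ Nat.card E ^ 2 := by
  rw [FiniteField.algebraMap_trace_eq_sum_pow, hEF]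
  simp only [Finset.sum_range_succ, Finset.sum_range_zero, zero_add, pow_zero, pow_one]

omit [Finite E] in
theorem pow_card_cube_eq_self (x : F) : x ^ Nat.card E ^ 3 = x := by
  have := Fintype.ofFinite F
  rw [← hEF, ← Module.natCard_eq_pow_finrank, Nat.card_eq_fintype_card, FiniteField.pow_card]

theorem polar_frobeniusTraceForm (u z : F) :
    QuadraticMap.polar (frobeniusTraceForm E F) u z =
      Algebra.traceForm E F (algebraMap E F (Algebra.trace E F u) - u) z := by
  have hshift : Algebra.trace E F (u * z ^ Nat.card E) =
      Algebra.trace E F (u ^ Nat.card E ^ 2 * z) := by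
    rw [← trace_pow_card (u ^ Nat.card E ^ 2 * z), mul_pow, ← pow_mul, ← pow_succ,
      pow_card_cube_eq_self hEF]
  calc QuadraticMap.polar (frobeniusTraceForm E F) u z
      = Algebra.trace E F (u * z ^ Nat.card E) + Algebra.trace E F (z * u ^ Nat.card E) := by
        let := Fintype.ofFinite E
        rw [Nat.card_eq_fintype_card]
        exact LinearMap.BilinMap.polar_toQuadraticMap (R := E) u z
    _ = Algebra.traceForm E F (algebraMap E F (Algebra.trace E F u) - u) z := by
        rw [hshift, ← map_add, Algebra.traceForm_apply,
          algebraMap_trace_eq_of_finrank_eq_three hEF]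
        ring_nf

theorem frobeniusTraceForm_eq_zero_iff {x : F} (hx : x ≠ 0) :
    frobeniusTraceForm E F x = 0 ↔ Algebra.trace E F x⁻¹ = 0 := by
  have hnorm : algebraMap E F (frobeniusTraceForm E F x) =
      x ^ (Nat.card E ^ 2 + Nat.card E + 1) * algebraMap E F (Algebra.trace E F x⁻¹) := by
    rw [frobeniusTraceForm_apply, algebraMap_trace_eq_of_finrank_eq_three hEF,
      algebraMap_trace_eq_of_finrank_eq_three hEF]
    have hcube : (x ^ (Nat.card E + 1)) ^ Nat.card E ^ 2 = x * x ^ Nat.card E ^ 2 := by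
      rw [← pow_mul, add_mul, one_mul, ← pow_succ', pow_add, pow_card_cube_eq_self hEF]
    rw [hcube, inv_pow, inv_pow]
    field_simp
    ring
  rw [← map_eq_zero_iff _ (algebraMap E F).injective, hnorm, mul_eq_zero,
    or_iff_right (pow_ne_zero _ hx), map_eq_zero_iff _ (algebraMap E F).injective]

theorem hasNucleus_frobeniusTraceForm [CharP E 2] : HasNucleus (frobeniusTraceForm E F) 1 := by
  have hthree : ((3 : ℕ) : E) = 1 := by
    exact_mod_cast (CharP.natCast_eq_natCast' E 2 (by decide : 3 ≡ 1 [MOD 2]))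
  have htrace (e : E) : Algebra.trace E F (algebraMap E F e) = e := by
    rw [Algebra.trace_algebraMap, hEF, nsmul_eq_mul, hthree, one_mul]
  constructor
  · rw [frobeniusTraceForm_apply, one_pow, ← map_one (algebraMap E F), htrace]
    exact one_ne_zero
  · ext u
    have hpolar : (frobeniusTraceForm E F).polarBilin u =
        Algebra.traceForm E F (algebraMap E F (Algebra.trace E F u) - u) :=
      LinearMap.ext (polar_frobeniusTraceForm hEF u)
    rw [LinearMap.mem_ker, hpolar, ← LinearMap.mem_ker,
      (traceForm_nondegenerate E F).ker_eq_bot, Submodule.mem_bot, sub_eq_zero,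
      Submodule.mem_span_singleton]
    simp only [← Algebra.algebraMap_eq_smul_one]
    constructor
    · exact fun hu ↦ ⟨_, hu⟩
    · rintro ⟨e, rfl⟩
      rw [htrace]

end FinrankThree

end CubicExtension

section AbsoluteTrace

variable (E : Type*) [Field E] [Algebra (ZMod 2) E]

/-- The canonical additive character `psi` of a field of characteristic two. -/
def psiAddChar : AddChar E ℤ where
  toFun := psi E
  map_zero_eq_one' := by simp [psi]
  map_add_eq_mul' x y := by
    simp only [psi, map_add]
    generalize Algebra.trace (ZMod 2) E x = t, Algebra.trace (ZMod 2) E y = t'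
    revert t t'
    decide

theorem psiAddChar_ne_zero [Finite E] : psiAddChar E ≠ 0 := by
  obtain ⟨x, hx⟩ := Algebra.trace_surjective (ZMod 2) E 1
  refine (AddChar.ne_zero_iff).mpr ⟨x, ?_⟩
  change psi E x ≠ 1
  simp [psi, hx]

theorem psi_eq_psiAddChar_trace [Finite E] {F : Type*} [Field F] [Finite F] [Algebra (ZMod 2) F]
    [Algebra E F] [IsScalarTower (ZMod 2) E F] (x : F) :
    psi F x = psiAddChar E (Algebra.trace E F x) := by
  change psi F x = psi E (Algebra.trace E F x)
  rw [psi, psi, Algebra.trace_trace]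

end AbsoluteTrace

section FiniteFields

theorem finrank_of_natCard_eq_pow {p n : ℕ} [Fact p.Prime] {F : Type*} [Field F] [Finite F]
    [Algebra (ZMod p) F] (hF : Nat.card F = p ^ n) : Module.finrank (ZMod p) F = n := by
  rw [Module.natCard_eq_pow_finrank (K := ZMod p), Nat.card_zmod] at hF
  exact Nat.pow_right_injective (Fact.out : p.Prime).two_le hF

theorem exists_intermediateField_natCard_eq {p n d : ℕ} [Fact p.Prime] {F : Type*} [Field F]
    [Finite F] [Algebra (ZMod p) F] (hF : Nat.card F = p ^ n) (hd : d ∣ n) :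
    ∃ E : IntermediateField (ZMod p) F, Nat.card E = p ^ d := by
  have hn : n ≠ 0 := by
    rintro rfl
    exact Finite.one_lt_card.ne' (hF.trans (pow_zero p))
  have hcard := GaloisField.card p d (ne_zero_of_dvd_ne_zero hn hd)
  obtain ⟨f⟩ := FiniteField.nonempty_algHom_of_finrank_dvd (F := ZMod p) (K := GaloisField p d)
    (L := F) (by rwa [finrank_of_natCard_eq_pow hcard, finrank_of_natCard_eq_pow hF])
  exact ⟨f.fieldRange,
    (Nat.card_congr (AlgEquiv.ofInjectiveField f).toEquiv).symm.trans hcard⟩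

theorem mem_range_algebraMap_iff_pow_card_eq_self {E F : Type*} [Field E] [Field F] [Algebra E F]
    [Finite E] [Finite F] {x : F} :
    x ∈ Set.range (algebraMap E F) ↔ x ^ Nat.card E = x := by
  let := Fintype.ofFinite E
  rw [Nat.card_eq_fintype_card]
  constructor
  · rintro ⟨e, rfl⟩
    rw [← map_pow, FiniteField.pow_card]
  · intro hx
    rw [IsGalois.mem_range_algebraMap_iff_fixed]
    intro g
    obtain ⟨i, rfl⟩ := (FiniteField.bijective_frobeniusAlgEquivOfAlgebraic_pow E F).2 g
    exact (MulAction.stabilizer Gal(F/E) x).pow_mem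
      (MulAction.mem_stabilizer_iff.mpr hx) i

variable {F : Type*} [Field F] {ω : F} (hω : ∀ x : F, x ≠ 0 → ∃ n : ℕ, x = ω ^ n)
include hω

theorem ne_zero_of_forall_eq_pow [Finite F] (hF : 2 < Nat.card F) : ω ≠ 0 := by
  rintro rfl
  have hsub : (Set.univ : Set F) ⊆ {0, 1} := fun x _ ↦ or_iff_not_imp_left.mpr fun hx ↦ by
    obtain ⟨n, rfl⟩ := hω x hx
    by_contra h
    exact hx (zero_pow fun hn ↦ h (by rw [hn, pow_zero]; rfl))
  have := (Set.ncard_le_ncard hsub).trans (Set.ncard_insert_le _ _)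
  rw [Set.ncard_univ, Set.ncard_singleton] at this
  omega

theorem zpow_eq_one_iff_of_forall_eq_pow (hω0 : ω ≠ 0) {m : ℤ} :
    ω ^ m = 1 ↔ ((Nat.card F - 1 : ℕ) : ℤ) ∣ m := by
  have hgen (u : Fˣ) : u ∈ Subgroup.zpowers (Units.mk0 ω hω0) := by
    obtain ⟨n, hn⟩ := hω u u.ne_zero
    exact ⟨n, Units.ext (by simp [hn])⟩
  rw [← Nat.card_units, ← orderOf_eq_card_of_forall_mem_zpowers hgen,
    orderOf_dvd_iff_zpow_eq_one, Units.ext_iff]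
  simp

end FiniteFields

section Translation

variable {s : ℕ}

theorem mof_mul_two_pow_sub_one (s : ℕ) : Mof s * (2 ^ s - 1) = 2 ^ (3 * s) - 1 := by
  zify [Nat.one_le_two_pow (n := s), Nat.one_le_two_pow (n := 3 * s)]
  rw [pow_mul', pow_mul']
  ring

theorem T1_eq {F : Type*} [Field F] (ω : F) :
    T1 s ω = {x | (Sa s ω (x.val : ℤ)).ncard = 1 * (2 ^ s - 1)} := by
  simp only [T1, one_mul]

theorem T3_eq {F : Type*} [Field F] (ω : F) :
    T3 s ω = {x | (Sa s ω (x.val : ℤ)).ncard = 0 * (2 ^ s - 1)} := by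
  simp only [T3, zero_mul]

theorem zpow_mem_cyc_iff {K : Type*} [Field K] {g : K} (hg0 : g ≠ 0) {M : ℕ}
    (hM : ∀ m : ℤ, g ^ m = 1 → (M : ℤ) ∣ m) {a i : ℤ} :
    g ^ a ∈ cyc M g i ↔ (i : ZMod M) = a := by
  rw [ZMod.intCast_eq_intCast_iff_dvd_sub]
  constructor
  · rintro ⟨t, ht⟩
    have hdvd := hM (a - (i + M * t)) (by rw [zpow_sub₀ hg0, ht, div_self (zpow_ne_zero _ hg0)])
    rwa [← sub_sub, dvd_sub_left (dvd_mul_right _ _)] at hdvd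
  · rintro ⟨t, ht⟩
    exact ⟨t, by rw [← ht, add_sub_cancel]⟩

theorem zpow_mem_Rclass_iff {K : Type*} [Field K] {g : K} (hg0 : g ≠ 0)
    (hM : ∀ m : ℤ, g ^ m = 1 → (Mof s : ℤ) ∣ m) {T : Set (ZMod (Mof s))} {a : ℤ} :
    g ^ a ∈ Rclass s g T ↔ (a : ZMod (Mof s)) ∈ T := by
  simp only [Rclass, Set.mem_iUnion, zpow_mem_cyc_iff hg0 hM, Int.cast_natCast,
    ZMod.natCast_zmod_val, exists_prop, exists_eq_right]

theorem ne_zero_of_mem_Rclass {K : Type*} [Field K] {g : K} (hg0 : g ≠ 0)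
    {T : Set (ZMod (Mof s))} {x : K} (hx : x ∈ Rclass s g T) : x ≠ 0 := by
  simp only [Rclass, Set.mem_iUnion] at hx
  obtain ⟨_, _, t, rfl⟩ := hx
  exact zpow_ne_zero _ hg0

variable {E F : Type*} [Field E] [Field F] [Algebra E F] [Finite E] [Finite F] {ω : F}
variable (hE : Nat.card E = 2 ^ s) (hEF : Module.finrank E F = 3)
include hE hEF

omit [Finite E] in
theorem trFE_eq_zero_iff {x : F} : trFE s x = 0 ↔ Algebra.trace E F x = 0 := by
  rw [← map_eq_zero_iff _ (algebraMap E F).injective,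
    algebraMap_trace_eq_of_finrank_eq_three hEF, hE, ← pow_mul']
  rfl

theorem Sa_eq_isotropicOnLine (a : ℤ) :
    Sa s ω a = isotropicOnLine (frobeniusTraceForm E F) (Algebra.traceForm E F) (ω ^ a) := by
  simp only [Sa, isotropicOnLine, trFE_eq_zero_iff hE hEF, frobeniusTraceForm_apply, hE,
    Algebra.traceForm_apply]

omit [Finite E] in
theorem natCard_sub_one_eq_mof_mul : Nat.card F - 1 = Mof s * (2 ^ s - 1) := by
  rw [mof_mul_two_pow_sub_one, Module.natCard_eq_pow_finrank (K := E), hE, hEF, ← pow_mul']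

variable (hω : ∀ x : F, x ≠ 0 → ∃ n : ℕ, x = ω ^ n) (hω0 : ω ≠ 0)
include hω hω0

theorem zpow_mem_span_one_iff {a : ℤ} :
    ω ^ a ∈ Submodule.span E {(1 : F)} ↔ (a : ZMod (Mof s)) = 0 := by
  have hF := natCard_sub_one_eq_mof_mul hE hEF
  have hs : ((2 ^ s - 1 : ℕ) : ℤ) ≠ 0 := by
    have := Finite.one_lt_card (α := E)
    omega
  have hpow : (ω ^ a) ^ Nat.card E = ω ^ a ↔ ω ^ (a * (2 ^ s - 1 : ℕ)) = 1 := by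
    rw [Nat.cast_pred (Nat.two_pow_pos s), mul_sub, mul_one, zpow_sub₀ hω0,
      div_eq_one_iff_eq (zpow_ne_zero _ hω0), hE, zpow_mul, zpow_natCast]
  rw [← Submodule.one_eq_span, Submodule.mem_one, ← Set.mem_range,
    mem_range_algebraMap_iff_pow_card_eq_self, hpow, zpow_eq_one_iff_of_forall_eq_pow hω hω0, hF,
    ZMod.intCast_zmod_eq_zero_iff_dvd, Nat.cast_mul, mul_dvd_mul_iff_right hs]

theorem isotropicOnLine_zpow_congr (Q : QuadraticForm E F) (b : LinearMap.BilinForm E F)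
    {a a' : ℤ} (h : (a : ZMod (Mof s)) = a') :
    isotropicOnLine Q b (ω ^ a) = isotropicOnLine Q b (ω ^ a') := by
  have hspan : ω ^ (a - a') ∈ Submodule.span E {(1 : F)} := by
    rw [zpow_mem_span_one_iff hE hEF hω hω0, Int.cast_sub, sub_eq_zero, h]
  obtain ⟨e, he⟩ := Submodule.mem_span_singleton.mp hspan
  have he0 : e ≠ 0 := by
    rintro rfl
    exact zpow_ne_zero _ hω0 (by rw [← he, zero_smul])
  have hsmul : ω ^ a = e • ω ^ a' := by
    rw [← one_mul (ω ^ a'), ← smul_mul_assoc, he, ← zpow_add₀ hω0, sub_add_cancel]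
  rw [hsmul, isotropicOnLine_smul Q b he0]

theorem intCast_mem_iff_zpow_mem_linesMeeting {a : ℤ} {k : ℕ} :
    (a : ZMod (Mof s)) ∈ {x | (Sa s ω (x.val : ℤ)).ncard = k * (2 ^ s - 1)} ↔
      ω ^ a ∈ linesMeeting (frobeniusTraceForm E F) (Algebra.traceForm E F) k := by
  have hval : (((a : ZMod (Mof s)).val : ℤ) : ZMod (Mof s)) = a := by
    rw [Int.cast_natCast, ZMod.natCast_zmod_val]
  rw [mem_linesMeeting, and_iff_right (zpow_ne_zero _ hω0), Set.mem_ofPred_eq,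
    Sa_eq_isotropicOnLine hE hEF, isotropicOnLine_zpow_congr hE hEF hω hω0 _ _ hval, hE]

theorem Rclass_eq_linesMeeting (k : ℕ) :
    Rclass s ω {x | (Sa s ω (x.val : ℤ)).ncard = k * (2 ^ s - 1)} =
      linesMeeting (frobeniusTraceForm E F) (Algebra.traceForm E F) k := by
  have hM (m : ℤ) (hm : ω ^ m = 1) : (Mof s : ℤ) ∣ m := by
    rw [zpow_eq_one_iff_of_forall_eq_pow hω hω0, natCard_sub_one_eq_mof_mul hE hEF,
      Nat.cast_mul] at hm
    exact dvd_of_mul_right_dvd hm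
  ext x
  by_cases hx : x = 0
  · exact iff_of_false (fun h ↦ ne_zero_of_mem_Rclass hω0 h hx)
      (fun h ↦ (mem_linesMeeting.mp h).1 hx)
  obtain ⟨n, rfl⟩ := hω x hx
  rw [← zpow_natCast, zpow_mem_Rclass_iff hω0 hM, Finset.mem_coe,
    intCast_mem_iff_zpow_mem_linesMeeting hE hEF hω hω0]

variable [Algebra (ZMod 2) E]

theorem neg_mem_T1_iff {a : ℤ} :
    ((-a : ℤ) : ZMod (Mof s)) ∈ T1 s ω ↔ frobeniusTraceForm E F (ω ^ a) = 0 := by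
  have : CharP E 2 := charP_of_injective_algebraMap' (ZMod 2) 2
  rw [T1_eq, intCast_mem_iff_zpow_mem_linesMeeting hE hEF hω hω0,
    (hasNucleus_frobeniusTraceForm hEF).mem_linesMeeting_one_iff hEF
      (traceForm_nondegenerate E F), and_iff_right (zpow_ne_zero _ hω0),
    Algebra.traceForm_apply, mul_one, zpow_neg,
    frobeniusTraceForm_eq_zero_iff hEF (zpow_ne_zero _ hω0)]

theorem intCast_ne_zero_of_neg_mem_T1 {a : ℤ} (ha : ((-a : ℤ) : ZMod (Mof s)) ∈ T1 s ω) :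
    (a : ZMod (Mof s)) ≠ 0 := by
  have : CharP E 2 := charP_of_injective_algebraMap' (ZMod 2) 2
  rw [neg_mem_T1_iff hE hEF hω hω0] at ha
  rw [Ne, ← zpow_mem_span_one_iff hE hEF hω hω0]
  exact fun hspan ↦ zpow_ne_zero a hω0
    ((hasNucleus_frobeniusTraceForm hEF).eq_zero_of_mem_span ha hspan)

variable [Algebra (ZMod 2) F] [IsScalarTower (ZMod 2) E F]

omit hE hEF hω hω0 in
theorem psiSum_coe_finset (c : F) (S : Finset F) :
    psiSum F c S = ∑ x ∈ S, psiAddChar E (Algebra.traceForm E F x c) := by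
  rw [psiSum, finsum_mem_coe_finset]
  refine Finset.sum_congr rfl fun x _ ↦ ?_
  rw [psi_eq_psiAddChar_trace E, Algebra.traceForm_apply, mul_comm]

theorem psiSum_Rclass (k : ℕ) (c : F) :
    psiSum F c (Rclass s ω {x | (Sa s ω (x.val : ℤ)).ncard = k * (2 ^ s - 1)}) =
      ∑ x ∈ linesMeeting (frobeniusTraceForm E F) (Algebra.traceForm E F) k,
        psiAddChar E (Algebra.traceForm E F x c) := by
  rw [Rclass_eq_linesMeeting hE hEF hω hω0, psiSum_coe_finset (E := E)]

open Classical in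
theorem psiSum_Rclass_T1 (a : ℤ) : psiSum F (ω ^ a) (Rclass s ω (T1 s ω)) =
    (if (a : ZMod (Mof s)) = 0 then 2 ^ (2 * s) else 0) - 1 := by
  have : CharP E 2 := charP_of_injective_algebraMap' (ZMod 2) 2
  rw [T1_eq, psiSum_Rclass hE hEF hω hω0,
    (hasNucleus_frobeniusTraceForm hEF).sum_addChar_linesMeeting_one hEF
      (traceForm_nondegenerate E F) (psiAddChar_ne_zero E)]
  simp only [zpow_mem_span_one_iff hE hEF hω hω0, hE, Nat.cast_pow, Nat.cast_ofNat, pow_mul']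

open Classical in
theorem two_mul_psiSum_Rclass_T2 (a : ℤ) : 2 * psiSum F (ω ^ a) (Rclass s ω (T2 s ω)) =
    (if ((-a : ℤ) : ZMod (Mof s)) ∈ T1 s ω then 2 ^ (2 * s) else 0) -
      (if (a : ZMod (Mof s)) = 0 then 2 ^ (2 * s) else 0) - 2 ^ s := by
  have : CharP E 2 := charP_of_injective_algebraMap' (ZMod 2) 2
  rw [T2, psiSum_Rclass hE hEF hω hω0,
    (hasNucleus_frobeniusTraceForm hEF).two_mul_sum_addChar_linesMeeting_two hEF
      (traceForm_nondegenerate E F) (psiAddChar_ne_zero E) (zpow_ne_zero a hω0)]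
  simp only [neg_mem_T1_iff hE hEF hω hω0, zpow_mem_span_one_iff hE hEF hω hω0, hE, Nat.cast_pow,
    Nat.cast_ofNat, pow_mul']

open Classical in
theorem two_mul_psiSum_Rclass_T3 (a : ℤ) : 2 * psiSum F (ω ^ a) (Rclass s ω (T3 s ω)) =
    2 ^ s - (if (a : ZMod (Mof s)) = 0 then 2 ^ (2 * s) else 0) -
      (if ((-a : ℤ) : ZMod (Mof s)) ∈ T1 s ω then 2 ^ (2 * s) else 0) := by
  have : CharP E 2 := charP_of_injective_algebraMap' (ZMod 2) 2
  rw [T3_eq, psiSum_Rclass hE hEF hω hω0,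
    (hasNucleus_frobeniusTraceForm hEF).two_mul_sum_addChar_linesMeeting_zero hEF
      (traceForm_nondegenerate E F) (psiAddChar_ne_zero E) (zpow_ne_zero a hω0)]
  simp only [neg_mem_T1_iff hE hEF hω hω0, zpow_mem_span_one_iff hE hEF hω hω0, hE, Nat.cast_pow,
    Nat.cast_ofNat, pow_mul']

end Translation

theorem statement13 (s : ℕ) (hs : 1 ≤ s) (F : Type*) [Field F] [Fintype F] [Algebra (ZMod 2) F]
    (hF : Fintype.card F = 2 ^ (3 * s)) (ω : F)
    (hω : ∀ x : F, x ≠ 0 → ∃ n : ℕ, x = ω ^ n) :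
    ∀ a : ℤ,
      ((a : ZMod (Mof s)) = 0 →
        psiSum F (ω ^ a) (Rclass s ω (T1 s ω)) = 2 ^ (2 * s) - 1) ∧
      ((a : ZMod (Mof s)) ≠ 0 →
        psiSum F (ω ^ a) (Rclass s ω (T1 s ω)) = -1) ∧
      ((a : ZMod (Mof s)) = 0 →
        psiSum F (ω ^ a) (Rclass s ω (T2 s ω)) = -(2 ^ (s - 1)) * (2 ^ s + 1)) ∧
      (((-a : ℤ) : ZMod (Mof s)) ∈ T1 s ω →
        psiSum F (ω ^ a) (Rclass s ω (T2 s ω)) = 2 ^ (s - 1) * (2 ^ s - 1)) ∧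
      ((a : ZMod (Mof s)) ≠ 0 → ((-a : ℤ) : ZMod (Mof s)) ∉ T1 s ω →
        psiSum F (ω ^ a) (Rclass s ω (T2 s ω)) = -(2 ^ (s - 1))) ∧
      ((a : ZMod (Mof s)) = 0 →
        psiSum F (ω ^ a) (Rclass s ω (T3 s ω)) = -(2 ^ (s - 1)) * (2 ^ s - 1)) ∧
      (((-a : ℤ) : ZMod (Mof s)) ∈ T1 s ω →
        psiSum F (ω ^ a) (Rclass s ω (T3 s ω)) = -(2 ^ (s - 1)) * (2 ^ s - 1)) ∧
      ((a : ZMod (Mof s)) ≠ 0 → ((-a : ℤ) : ZMod (Mof s)) ∉ T1 s ω →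
        psiSum F (ω ^ a) (Rclass s ω (T3 s ω)) = 2 ^ (s - 1)) := by
  have hcard : Nat.card F = 2 ^ (3 * s) := by rw [Nat.card_eq_fintype_card, hF]
  obtain ⟨E, hE⟩ := exists_intermediateField_natCard_eq hcard (dvd_mul_left s 3)
  have hEF : Module.finrank E F = 3 := by
    rw [Module.natCard_eq_pow_finrank (K := E), hE, ← pow_mul'] at hcard
    exact Nat.eq_of_mul_eq_mul_right hs (Nat.pow_right_injective le_rfl hcard)
  have hω0 : ω ≠ 0 := by
    refine ne_zero_of_forall_eq_pow hω (hcard ▸ ?_)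
    exact (by decide : 2 < 2 ^ 3).trans_le (Nat.pow_le_pow_right two_pos (by omega))
  have hpow : (2 : ℤ) ^ s = 2 * 2 ^ (s - 1) := by rw [← pow_succ', Nat.sub_add_cancel hs]
  have hsq : (2 : ℤ) ^ (2 * s) = (2 * 2 ^ (s - 1)) ^ 2 := by rw [pow_mul', hpow]
  intro a
  have h1 := psiSum_Rclass_T1 hE hEF hω hω0 a
  have h2 := two_mul_psiSum_Rclass_T2 hE hEF hω hω0 a
  have h3 := two_mul_psiSum_Rclass_T3 hE hEF hω hω0 a
  have hexcl := intCast_ne_zero_of_neg_mem_T1 hE hEF hω hω0 (a := a)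
  simp only [hsq, hpow] at h1 h2 h3 ⊢
  refine ⟨fun h ↦ ?_, fun h ↦ ?_, fun h ↦ ?_, fun h ↦ ?_, fun h h' ↦ ?_, fun h ↦ ?_, fun h ↦ ?_,
    fun h h' ↦ ?_⟩ <;> split_ifs at h1 h2 h3 <;> first | tauto | linarith
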